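/- Let α ∈ (1,∞), let ρ be a nonzero positive semidefinite complex matrix and σ a positive definite complex matrix of the same size. Then the sequence n ↦ (1/n) · D^#_α(ρ^{⊗n} ‖ σ^{⊗n}) converges as n → ∞ to the sandwiched Rényi divergence 𝐷̃_α(ρ‖σ). -/

import Mathlib

open Matrix Filter
open scoped Kronecker Classical ComplexOrder

noncomputable def Matrix.rpowH {n : Type*} [Fintype n] [DecidableEq n]
    (A : Matrix n n ℂ) (r : ℝ) : Matrix n n ℂ :=
  if hA : A.IsHermitian then
    (hA.eigenvectorUnitary : Matrix n n ℂ) *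
      Matrix.diagonal (fun i => ((hA.eigenvalues i ^ r : ℝ) : ℂ)) *
      star (hA.eigenvectorUnitary : Matrix n n ℂ)
  else 0

noncomputable def Matrix.gmean {n : Type*} [Fintype n] [DecidableEq n]
    (β : ℝ) (S A : Matrix n n ℂ) : Matrix n n ℂ :=
  S.rpowH (1/2) * ((S.rpowH (-(1/2)) * A * S.rpowH (-(1/2))).rpowH β) * S.rpowH (1/2)

noncomputable def QSharp {n : Type*} [Fintype n] [DecidableEq n]
    (α : ℝ) (ρ σ : Matrix n n ℂ) : ℝ :=
  sInf { t : ℝ | ∃ A : Matrix n n ℂ, A.PosSemidef ∧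
    (Matrix.gmean (1/α) σ A - ρ).PosSemidef ∧ t = A.trace.re }

noncomputable def DSharp {n : Type*} [Fintype n] [DecidableEq n]
    (α : ℝ) (ρ σ : Matrix n n ℂ) : ℝ :=
  1/(α-1) * Real.logb 2 (QSharp α ρ σ)

noncomputable def opNorm {n : Type*} [Fintype n] [DecidableEq n] (A : Matrix n n ℂ) : ℝ :=
  ‖(Matrix.toEuclideanCLM (𝕜 := ℂ) A : EuclideanSpace ℂ n →L[ℂ] EuclideanSpace ℂ n)‖

noncomputable def Dtilde {n : Type*} [Fintype n] [DecidableEq n]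
    (α : ℝ) (ρ σ : Matrix n n ℂ) : ℝ :=
  1/(α-1) * Real.logb 2
    (((σ.rpowH ((1-α)/(2*α)) * ρ * σ.rpowH ((1-α)/(2*α))).rpowH α).trace.re)

noncomputable def Dhat {n : Type*} [Fintype n] [DecidableEq n]
    (α : ℝ) (ρ σ : Matrix n n ℂ) : ℝ :=
  1/(α-1) * Real.logb 2
    ((σ.rpowH (1/2) * ((σ.rpowH (-(1/2)) * ρ * σ.rpowH (-(1/2))).rpowH α) * σ.rpowH (1/2)).trace.re)

/-- The n-th Kronecker (tensor) power of a matrix, indexed by Fin n → ι. -/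
noncomputable def tpow {ι : Type*} (ρ : Matrix ι ι ℂ) (n : ℕ) :
    Matrix (Fin n → ι) (Fin n → ι) ℂ :=
  Matrix.of fun f g => ∏ k, ρ (f k) (g k)

/-!
Write `q = (1 - α) / (2α)`. If `A` commutes with `σ`, the constraint `ρ ≤ σ #_{1/α} A` reads
`σ^q ρ σ^q ≤ A^{1/α}`, which forces `tr (σ^q ρ σ^q)^α ≤ tr A` and is an equality for
`A = (σ^q ρ σ^q)^α` if that matrix commutes with `σ`. Pinching by the spectral projections of `σ`
makes `A` and `σ^q ρ σ^q` commute with `σ`. By the pinching inequality `X ≤ |spec σ| · pinching X`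
this costs only a power of the number of distinct eigenvalues of `σ`, while a Young inequality for
traces shows that `X ↦ tr X^α` is monotone and does not increase under pinching. An eigenvalue of
`σ^{⊗n}` depends only on how often each eigenvalue of `σ` occurs in the product, so there are at
most `(n + 1)^d` of them, `d` being the size of `σ`, and this factor disappears after taking `1/n`
times the logarithm.
-/

section Pinching

/-- The pinching `a ↦ ∑ₜ pₜ a pₜ` by a finite family `p`, which is meant to be a family of
orthogonal projections summing to `1`. -/
def pinching {T R : Type*} [Fintype T] [NonUnitalNonAssocSemiring R] (p : T → R) (a : R) : R :=
  ∑ t, p t * a * p t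

variable {T R : Type*} [Fintype T] {p : T → R}

lemma mul_pinching [Semiring R] (hp : OrthogonalIdempotents p) (a : R) (t : T) :
    p t * pinching p a = p t * a * p t := by
  classical
  simp only [pinching, Finset.mul_sum, ← mul_assoc, hp.mul_eq, ite_mul, zero_mul,
    Finset.sum_ite_eq, Finset.mem_univ, if_true]

lemma pinching_mul [Semiring R] (hp : OrthogonalIdempotents p) (a : R) (t : T) :
    pinching p a * p t = p t * a * p t := by
  classical
  simp only [pinching, Finset.sum_mul, mul_assoc, hp.mul_eq, mul_ite, mul_zero,
    Finset.sum_ite_eq', Finset.mem_univ, if_true]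

lemma commute_pinching [Semiring R] (hp : OrthogonalIdempotents p) (a : R) (t : T) :
    Commute (p t) (pinching p a) :=
  (mul_pinching hp a t).trans (pinching_mul hp a t).symm

lemma pinching_nonneg [Semiring R] [StarRing R] [PartialOrder R] [StarOrderedRing R]
    (hp : ∀ t, IsSelfAdjoint (p t)) {a : R} (ha : 0 ≤ a) : 0 ≤ pinching p a :=
  Finset.sum_nonneg fun t _ => (hp t).conjugate_nonneg ha

lemma sum_sum_sub_mul_mul_sub [Ring R] (hp : ∑ t, p t = 1) (a : R) :
    ∑ t, ∑ u, (p t - p u) * a * (p t - p u) = 2 • (Fintype.card T • pinching p a - a) := by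
  have cross : ∑ t, ∑ u, p t * a * p u = a := by
    simp only [← Finset.mul_sum, hp, mul_one, ← Finset.sum_mul, one_mul]
  have cross' : ∑ t, ∑ u, p u * a * p t = a := by rw [Finset.sum_comm, cross]
  simp only [sub_mul, mul_sub, Finset.sum_sub_distrib, Finset.sum_const, Finset.card_univ,
    cross, cross', ← Finset.smul_sum, pinching]
  abel

lemma le_card_smul_pinching [Ring R] [StarRing R] [PartialOrder R] [StarOrderedRing R]
    [Algebra ℝ R] [StarModule ℝ R] (hsa : ∀ t, IsSelfAdjoint (p t)) (hp : ∑ t, p t = 1) {a : R}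
    (ha : 0 ≤ a) : a ≤ (Fintype.card T : ℝ) • pinching p a := by
  have h : 0 ≤ (2 : ℝ) • ((Fintype.card T : ℝ) • pinching p a - a) := by
    rw [Nat.cast_smul_eq_nsmul, ofNat_smul_eq_nsmul ℝ, ← sum_sum_sub_mul_mul_sub hp]
    exact Finset.sum_nonneg fun t _ => Finset.sum_nonneg fun u _ =>
      ((hsa t).sub (hsa u)).conjugate_nonneg ha
  exact sub_nonneg.1 (nonneg_of_smul_nonneg_of_pos_left h two_pos)

end Pinching

section SpectralProj

open scoped MatrixOrder

variable {n : Type*} [Fintype n] [DecidableEq n] {A B : Matrix n n ℂ}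

lemma continuousOn_spectrum (A : Matrix n n ℂ) (f : ℝ → ℝ) : ContinuousOn f (spectrum ℝ A) :=
  (Set.toFinite _).continuousOn _

/-- The spectral projection of a Hermitian matrix `A` onto the eigenspace of `s`, obtained from the
functional calculus by the indicator function of `s`. -/
noncomputable def spectralProj (A : Matrix n n ℂ) (s : spectrum ℝ A) : Matrix n n ℂ :=
  cfc (Pi.single (s : ℝ) (1 : ℝ)) A

lemma isSelfAdjoint_spectralProj (A : Matrix n n ℂ) (s : spectrum ℝ A) :
    IsSelfAdjoint (spectralProj A s) :=
  cfc_predicate _ A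

lemma spectralProj_nonneg (A : Matrix n n ℂ) (s : spectrum ℝ A) : 0 ≤ spectralProj A s :=
  cfc_nonneg fun x _ => (Pi.single_nonneg (α := fun _ => ℝ)).2 zero_le_one x

lemma cfc_mul_spectralProj (A : Matrix n n ℂ) (f : ℝ → ℝ) (s : spectrum ℝ A) :
    cfc f A * spectralProj A s = f s • spectralProj A s := by
  rw [spectralProj, ← cfc_mul f _ A (continuousOn_spectrum A _) (continuousOn_spectrum A _),
    ← cfc_smul _ _ A (continuousOn_spectrum A _)]
  refine cfc_congr fun x _ => ?_
  obtain rfl | hx := eq_or_ne x s <;> simp [*]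

lemma mul_spectralProj (hA : A.IsHermitian) (s : spectrum ℝ A) :
    A * spectralProj A s = (s : ℝ) • spectralProj A s := by
  simpa only [cfc_id' ℝ A hA.isSelfAdjoint] using cfc_mul_spectralProj A (fun x => x) s

lemma spectralProj_mul (hA : A.IsHermitian) (s : spectrum ℝ A) :
    spectralProj A s * A = (s : ℝ) • spectralProj A s := by
  rw [← mul_spectralProj hA]
  exact (Commute.refl A).cfc_real _

lemma completeOrthogonalIdempotents_spectralProj [Fintype (spectrum ℝ A)] (hA : A.IsHermitian) :
    CompleteOrthogonalIdempotents (spectralProj A) where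
  idem s := by
    have h := cfc_mul_spectralProj A (Pi.single (s : ℝ) 1) s
    rwa [Pi.single_eq_same, one_smul] at h
  ortho s t hst := by
    have h := cfc_mul_spectralProj A (Pi.single (s : ℝ) 1) t
    rwa [Pi.single_eq_of_ne (Subtype.coe_ne_coe.2 hst.symm), zero_smul] at h
  complete := by
    simp only [spectralProj]
    rw [← cfc_sum_univ _ A (fun s => continuousOn_spectrum A _), ← cfc_one ℝ A hA.isSelfAdjoint]
    refine cfc_congr fun x hx => ?_
    rw [Finset.sum_apply, Finset.sum_eq_single ⟨x, hx⟩ _ (by simp), Pi.single_eq_same,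
      Pi.one_apply]
    exact fun s _ hs => Pi.single_eq_of_ne (fun h => hs (Subtype.ext h.symm)) _

lemma cfc_eq_sum_spectralProj [Fintype (spectrum ℝ A)] (hA : A.IsHermitian) (f : ℝ → ℝ) :
    cfc f A = ∑ s : spectrum ℝ A, f s • spectralProj A s := by
  rw [← mul_one (cfc f A), ← (completeOrthogonalIdempotents_spectralProj hA).complete,
    Finset.mul_sum]
  exact Finset.sum_congr rfl fun s _ => cfc_mul_spectralProj A f s

lemma commute_of_commute_spectralProj (hA : A.IsHermitian)
    (h : ∀ s, Commute (spectralProj A s) B) : Commute A B := by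
  have := Fintype.ofFinite (spectrum ℝ A)
  rw [← cfc_id' ℝ A hA.isSelfAdjoint, cfc_eq_sum_spectralProj hA]
  exact Commute.sum_left _ _ _ fun s _ => (h s).smul_left _

lemma cfc_mul_of_mul_eq_mul_diagonal {m : Type*} [Fintype m] [DecidableEq m] (hA : A.IsHermitian)
    {M : Matrix n m ℂ} {d : m → ℝ} (h : A * M = M * diagonal fun j => (d j : ℂ)) (f : ℝ → ℝ) :
    cfc f A * M = M * diagonal fun j => (f (d j) : ℂ) := by
  have := Fintype.ofFinite (spectrum ℝ A)
  have proj_mul (s : spectrum ℝ A) :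
      f s • (spectralProj A s * M) = spectralProj A s * M * diagonal fun j => (f (d j) : ℂ) := by
    have hs : (s : ℝ) • (spectralProj A s * M) =
        spectralProj A s * M * diagonal fun j => (d j : ℂ) := by
      rw [Matrix.mul_assoc, ← h, ← Matrix.mul_assoc, spectralProj_mul hA, Matrix.smul_mul]
    ext i j
    replace hs := congr_fun₂ hs i j
    simp only [Matrix.smul_apply, Complex.real_smul, mul_diagonal] at hs ⊢
    obtain hds | h0 := eq_or_ne (d j) s
    · rw [hds, mul_comm]
    · have hzero : (spectralProj A s * M) i j = 0 := by
        by_contra hne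
        exact h0 (by exact_mod_cast (mul_left_cancel₀ hne ((mul_comm _ _).trans hs)).symm)
      rw [hzero, mul_zero, zero_mul]
  rw [cfc_eq_sum_spectralProj hA, Matrix.sum_mul]
  simp_rw [Matrix.smul_mul, proj_mul, ← Matrix.sum_mul]
  rw [(completeOrthogonalIdempotents_spectralProj hA).complete, Matrix.one_mul]

lemma cfc_mul_of_mul_eq_smul {m : Type*} [Finite m] (hA : A.IsHermitian)
    {M : Matrix n m ℂ} {c : ℝ} (h : A * M = c • M) (f : ℝ → ℝ) :
    cfc f A * M = f c • M := by
  classical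
  have := Fintype.ofFinite m
  have smul_eq (a : ℝ) : a • M = M * (diagonal fun _ => (a : ℂ) : Matrix m m ℂ) := by
    rw [← smul_eq_mul_diagonal]
    rfl
  rw [smul_eq] at h ⊢
  exact cfc_mul_of_mul_eq_mul_diagonal hA h f

lemma cfc_mul_cfc_mul_spectralProj_mul_spectralProj (hAB : Commute A B) (f g : ℝ → ℝ)
    (s : spectrum ℝ A) (t : spectrum ℝ B) :
    cfc f A * cfc g B * (spectralProj A s * spectralProj B t)
      = (f s * g t) • (spectralProj A s * spectralProj B t) := by
  have hsB : Commute (cfc g B) (spectralProj A s) := ((hAB.cfc_real _).symm).cfc_real g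
  rw [hsB.mul_mul_mul_comm, cfc_mul_spectralProj, cfc_mul_spectralProj, smul_mul_smul_comm]

lemma commute_pinching_spectralProj [Fintype (spectrum ℝ A)] (hA : A.IsHermitian)
    (B : Matrix n n ℂ) : Commute A (pinching (spectralProj A) B) :=
  commute_of_commute_spectralProj hA
    (commute_pinching (completeOrthogonalIdempotents_spectralProj hA).1 B)

end SpectralProj

section RealPowers

open scoped MatrixOrder Matrix.Norms.L2Operator

variable {n : Type*} [Fintype n] [DecidableEq n] {A B σ : Matrix n n ℂ}

lemma smul_rpow (hA : 0 ≤ A) {c : ℝ} (hc : 0 ≤ c) (r : ℝ) : (c • A) ^ r = c ^ r • A ^ r := by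
  rw [CFC.rpow_eq_cfc_real hA, CFC.rpow_eq_cfc_real (smul_nonneg hc hA),
    ← cfc_comp_smul c (fun x : ℝ => x ^ r) A (Set.Finite.continuousOn (Set.toFinite _) _),
    ← cfc_smul _ _ A (continuousOn_spectrum A _)]
  refine cfc_congr fun x hx => ?_
  exact Real.mul_rpow hc (spectrum_nonneg_of_nonneg hA hx)

lemma mul_rpow_of_commute (hA : 0 ≤ A) (hB : 0 ≤ B) (hAB : Commute A B) (r : ℝ) :
    (A * B) ^ r = A ^ r * B ^ r := by
  have := Fintype.ofFinite (spectrum ℝ A)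
  have := Fintype.ofFinite (spectrum ℝ B)
  have hAB₀ : 0 ≤ A * B := hAB.mul_nonneg hA hB
  have rpow_mul_proj (s : spectrum ℝ A) (t : spectrum ℝ B) :
      (A * B) ^ r * (spectralProj A s * spectralProj B t)
        = A ^ r * B ^ r * (spectralProj A s * spectralProj B t) := by
    have hst : A * B * (spectralProj A s * spectralProj B t)
        = ((s : ℝ) * t) • (spectralProj A s * spectralProj B t) := by
      simpa only [cfc_id' ℝ A hA.isSelfAdjoint, cfc_id' ℝ B hB.isSelfAdjoint] using
        cfc_mul_cfc_mul_spectralProj_mul_spectralProj hAB (fun x => x) (fun x => x) s t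
    rw [CFC.rpow_eq_cfc_real hAB₀, cfc_mul_of_mul_eq_smul hAB₀.posSemidef.isHermitian hst,
      Real.mul_rpow (spectrum_nonneg_of_nonneg hA s.2) (spectrum_nonneg_of_nonneg hB t.2),
      CFC.rpow_eq_cfc_real hA, CFC.rpow_eq_cfc_real hB,
      cfc_mul_cfc_mul_spectralProj_mul_spectralProj hAB]
  have sum_proj : ∑ s, ∑ t, spectralProj A s * spectralProj B t = 1 := by
    have hprojA := completeOrthogonalIdempotents_spectralProj hA.posSemidef.isHermitian
    have hprojB := completeOrthogonalIdempotents_spectralProj hB.posSemidef.isHermitian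
    simp_rw [← Finset.mul_sum, hprojB.complete, mul_one, hprojA.complete]
  rw [← mul_one ((A * B) ^ r), ← mul_one (A ^ r * B ^ r), ← sum_proj]
  simp_rw [Finset.mul_sum, rpow_mul_proj]

lemma mul_rpow_sub_one (hA : 0 ≤ A) {r : ℝ} (hr : r ≠ 0) : A * A ^ (r - 1) = A ^ r := by
  rw [CFC.rpow_eq_cfc_real hA, CFC.rpow_eq_cfc_real hA]
  conv_lhs => enter [1]; rw [← cfc_id' ℝ A hA.isSelfAdjoint]
  rw [← cfc_mul _ _ A (continuousOn_spectrum A _) (continuousOn_spectrum A _)]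
  refine cfc_congr fun x hx => ?_
  rw [← Real.rpow_one_add' (spectrum_nonneg_of_nonneg hA hx) (by rwa [add_sub_cancel]),
    add_sub_cancel]

lemma rpow_mul_mul_rpow_nonneg (hA : 0 ≤ A) (x : ℝ) : 0 ≤ σ ^ x * A * σ ^ x :=
  CFC.rpow_nonneg.isSelfAdjoint.conjugate_nonneg hA

lemma rpow_mul_mul_rpow_le (hAB : A ≤ B) (x : ℝ) : σ ^ x * A * σ ^ x ≤ σ ^ x * B * σ ^ x :=
  CFC.rpow_nonneg.isSelfAdjoint.conjugate_le_conjugate hAB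

lemma rpow_mul_rpow_mul_mul_rpow_mul_rpow (hσ : IsUnit σ) (A : Matrix n n ℂ) (x y : ℝ) :
    σ ^ x * (σ ^ y * A * σ ^ y) * σ ^ x = σ ^ (x + y) * A * σ ^ (x + y) := by
  have hcomm : σ ^ x * σ ^ y = σ ^ y * σ ^ x := by
    rw [← CFC.rpow_add hσ, add_comm, CFC.rpow_add hσ]
  conv_rhs => enter [2]; rw [CFC.rpow_add hσ, hcomm]
  rw [CFC.rpow_add hσ]
  simp only [Matrix.mul_assoc]

lemma rpow_mul_mul_rpow_le_iff (hσ : IsStrictlyPositive σ) (x : ℝ) :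
    A ≤ σ ^ (-x) * B * σ ^ (-x) ↔ σ ^ x * A * σ ^ x ≤ B := by
  have cancel (C : Matrix n n ℂ) (y z : ℝ) (hyz : y + z = 0) :
      σ ^ y * (σ ^ z * C * σ ^ z) * σ ^ y = C := by
    rw [rpow_mul_rpow_mul_mul_rpow_mul_rpow hσ.isUnit, hyz, CFC.rpow_zero σ, one_mul, mul_one]
  constructor <;> intro h
  · simpa only [cancel B x (-x) (add_neg_cancel x)] using rpow_mul_mul_rpow_le (σ := σ) h x
  · simpa only [cancel A (-x) x (neg_add_cancel x)] using rpow_mul_mul_rpow_le (σ := σ) h (-x)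

lemma commute_rpow (hσ : 0 ≤ σ) (h : Commute σ A) (x : ℝ) : Commute (σ ^ x) A := by
  rw [CFC.rpow_eq_cfc_real hσ]
  exact h.cfc_real _

lemma rpow_mul_mul_rpow_rpow_of_commute (hσ : IsStrictlyPositive σ) (hA : 0 ≤ A)
    (h : Commute σ A) {x : ℝ} (hx : x ≠ 0) (r : ℝ) :
    (σ ^ x * A * σ ^ x) ^ r = σ ^ (x * r) * A ^ r * σ ^ (x * r) := by
  have hσA : Commute (σ ^ x) A := commute_rpow hσ.nonneg h x
  have hx₀ : 0 ≤ σ ^ x := CFC.rpow_nonneg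
  rw [mul_rpow_of_commute (hσA.mul_nonneg hx₀ hA) hx₀ ((Commute.refl _).mul_left hσA.symm),
    mul_rpow_of_commute hx₀ hA hσA, CFC.rpow_rpow σ x r hx hσ]

end RealPowers

section TraceInequalities

open scoped MatrixOrder Matrix.Norms.L2Operator

variable {n : Type*} [Fintype n] {A B : Matrix n n ℂ}

lemma re_trace_mul_nonneg (hA : 0 ≤ A) (hB : 0 ≤ B) : 0 ≤ (A * B).trace.re := by
  classical
  have h : 0 ≤ (CFC.sqrt A * B * CFC.sqrt A).trace :=
    ((CFC.sqrt_nonneg A).isSelfAdjoint.conjugate_nonneg hB).posSemidef.trace_nonneg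
  rw [Matrix.trace_mul_comm, ← Matrix.mul_assoc, CFC.sqrt_mul_sqrt_self A hA] at h
  exact (Complex.le_def.1 h).1

variable [DecidableEq n]

lemma trace_pinching_mul {T : Type*} [Fintype T] {p : T → Matrix n n ℂ}
    (hp : CompleteOrthogonalIdempotents p) (A : Matrix n n ℂ) {B : Matrix n n ℂ}
    (hB : ∀ t, Commute (p t) B) : (pinching p A * B).trace = (A * B).trace := by
  have trace_proj (t : T) : (p t * A * p t * B).trace = (A * B * p t).trace := by
    rw [Matrix.mul_assoc _ _ B, Matrix.mul_assoc, Matrix.trace_mul_comm, (hB t).eq,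
      Matrix.mul_assoc A, Matrix.mul_assoc B, (hp.idem t).eq, Matrix.mul_assoc]
  rw [pinching, Matrix.sum_mul, Matrix.trace_sum, Finset.sum_congr rfl fun t _ => trace_proj t,
    ← Matrix.trace_sum, ← Matrix.mul_sum, hp.complete, mul_one]

lemma trace_pinching {T : Type*} [Fintype T] {p : T → Matrix n n ℂ}
    (hp : CompleteOrthogonalIdempotents p) (A : Matrix n n ℂ) :
    (pinching p A).trace = A.trace := by
  simpa only [mul_one] using trace_pinching_mul hp A fun t => Commute.one_right (p t)

lemma re_trace_cfc_mul_cfc [Fintype (spectrum ℝ A)] [Fintype (spectrum ℝ B)] (hA : A.IsHermitian)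
    (hB : B.IsHermitian) (f g : ℝ → ℝ) :
    (cfc f A * cfc g B).trace.re
      = ∑ s : spectrum ℝ A, ∑ t : spectrum ℝ B,
          f s * g t * (spectralProj A s * spectralProj B t).trace.re := by
  simp only [cfc_eq_sum_spectralProj hA, cfc_eq_sum_spectralProj hB, Finset.sum_mul_sum,
    smul_mul_smul_comm, Matrix.trace_sum, Matrix.trace_smul, Complex.re_sum, Complex.smul_re,
    smul_eq_mul]

lemma re_trace_cfc_mul_cfc_le (hA : A.IsHermitian) (hB : B.IsHermitian) {f g F G : ℝ → ℝ}
    (h : ∀ s ∈ spectrum ℝ A, ∀ t ∈ spectrum ℝ B, f s * g t ≤ F s + G t) :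
    (cfc f A * cfc g B).trace.re ≤ (cfc F A).trace.re + (cfc G B).trace.re := by
  have := Fintype.ofFinite (spectrum ℝ A)
  have := Fintype.ofFinite (spectrum ℝ B)
  have trace_left := re_trace_cfc_mul_cfc hA hB F 1
  have trace_right := re_trace_cfc_mul_cfc hA hB 1 G
  rw [cfc_one ℝ B hB.isSelfAdjoint, mul_one] at trace_left
  rw [cfc_one ℝ A hA.isSelfAdjoint, one_mul] at trace_right
  rw [trace_left, trace_right, re_trace_cfc_mul_cfc hA hB, ← Finset.sum_add_distrib]
  refine Finset.sum_le_sum fun s _ => ?_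
  rw [← Finset.sum_add_distrib]
  refine Finset.sum_le_sum fun t _ => ?_
  rw [← add_mul, Pi.one_apply, Pi.one_apply, mul_one, one_mul]
  exact mul_le_mul_of_nonneg_right (h s s.2 t t.2)
    (re_trace_mul_nonneg (spectralProj_nonneg A s) (spectralProj_nonneg B t))

lemma re_trace_mul_le_re_trace_rpow_add (hA : 0 ≤ A) (hB : 0 ≤ B) {p q : ℝ}
    (hpq : p.HolderConjugate q) :
    (A * B).trace.re ≤ (A ^ p).trace.re / p + (B ^ q).trace.re / q := by
  have young := re_trace_cfc_mul_cfc_le hA.posSemidef.isHermitian hB.posSemidef.isHermitian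
    (f := fun x => x) (g := fun x => x) (F := fun x => p⁻¹ • x ^ p) (G := fun x => q⁻¹ • x ^ q)
    fun s hs t ht => by
      simpa only [smul_eq_mul, div_eq_inv_mul] using Real.young_inequality_of_nonneg
        (spectrum_nonneg_of_nonneg hA hs) (spectrum_nonneg_of_nonneg hB ht) hpq
  rwa [cfc_id' ℝ A hA.isSelfAdjoint, cfc_id' ℝ B hB.isSelfAdjoint,
    cfc_smul _ _ A (continuousOn_spectrum A _), cfc_smul _ _ B (continuousOn_spectrum B _),
    ← CFC.rpow_eq_cfc_real hA, ← CFC.rpow_eq_cfc_real hB, Matrix.trace_smul, Matrix.trace_smul,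
    Complex.smul_re, Complex.smul_re, smul_eq_mul, smul_eq_mul, ← div_eq_inv_mul,
    ← div_eq_inv_mul] at young

/-- `tr Aᵅ ≤ tr B Aᵅ⁻¹ ≤ (1/α) tr Bᵅ + (1 - 1/α) tr Aᵅ` by Young's inequality. -/
lemma re_trace_rpow_le_of_re_trace_mul_le (hA : 0 ≤ A) (hB : 0 ≤ B) {α : ℝ} (hα : 1 < α)
    (h : (A * A ^ (α - 1)).trace.re ≤ (B * A ^ (α - 1)).trace.re) :
    (A ^ α).trace.re ≤ (B ^ α).trace.re := by
  have hconj : α.HolderConjugate (α / (α - 1)) := Real.HolderConjugate.conjExponent hα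
  have young := h.trans (re_trace_mul_le_re_trace_rpow_add hB CFC.rpow_nonneg hconj)
  rw [mul_rpow_sub_one hA hconj.ne_zero,
    CFC.rpow_rpow_of_exponent_nonneg A _ _ (by linarith) hconj.symm.nonneg,
    mul_div_cancel₀ _ (by linarith)] at young
  have key : (A ^ α).trace.re / α ≤ (B ^ α).trace.re / α := by
    rw [div_eq_mul_inv _ (α / (α - 1)), ← hconj.one_sub_inv, mul_one_sub, ← div_eq_mul_inv] at young
    linarith
  exact (div_le_div_iff_of_pos_right (by linarith)).1 key

lemma re_trace_rpow_mono (hA : 0 ≤ A) (hAB : A ≤ B) {α : ℝ} (hα : 1 < α) :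
    (A ^ α).trace.re ≤ (B ^ α).trace.re := by
  refine re_trace_rpow_le_of_re_trace_mul_le hA (hA.trans hAB) hα ?_
  have h := re_trace_mul_nonneg (sub_nonneg.2 hAB) (CFC.rpow_nonneg (a := A) (y := α - 1))
  rwa [sub_mul, Matrix.trace_sub, Complex.sub_re, sub_nonneg] at h

lemma re_trace_pinching_rpow_le {T : Type*} [Fintype T] {p : T → Matrix n n ℂ}
    (hp : CompleteOrthogonalIdempotents p) (hsa : ∀ t, IsSelfAdjoint (p t)) (hA : 0 ≤ A) {α : ℝ}
    (hα : 1 < α) : (pinching p A ^ α).trace.re ≤ (A ^ α).trace.re := by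
  have hpA : 0 ≤ pinching p A := pinching_nonneg hsa hA
  have hcomm (t : T) : Commute (p t) (pinching p A ^ (α - 1)) :=
    (commute_rpow hpA (commute_pinching hp.1 A t).symm _).symm
  refine re_trace_rpow_le_of_re_trace_mul_le hpA hA hα ?_
  rw [← trace_pinching_mul hp A hcomm]

lemma re_trace_rpow_pos (hA : 0 ≤ A) (hA0 : A ≠ 0) {α : ℝ} (hα : 0 < α) :
    0 < (A ^ α).trace.re := by
  have hpsd := (CFC.rpow_nonneg (a := A) (y := α)).posSemidef
  have hne : A ^ α ≠ 0 := fun h => hA0 <| by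
    rw [← CFC.rpow_one A, ← mul_inv_cancel₀ hα.ne', ← CFC.rpow_rpow_of_exponent_nonneg A _ _ hα.le
      (inv_nonneg.2 hα.le), h]
    exact CFC.zero_rpow (inv_ne_zero hα.ne')
  have htr := hpsd.trace_nonneg.lt_of_ne' (mt hpsd.trace_eq_zero_iff.1 hne)
  exact (Complex.lt_def.1 htr).1

end TraceInequalities

section OneShot

open scoped MatrixOrder Matrix.Norms.L2Operator

variable {n : Type*} [Fintype n] [DecidableEq n] {A B ρ σ : Matrix n n ℂ} {α : ℝ}

lemma rpowH_eq_rpow (hA : 0 ≤ A) (r : ℝ) : A.rpowH r = A ^ r := by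
  rw [Matrix.rpowH, dif_pos hA.posSemidef.isHermitian, CFC.rpow_eq_cfc_real hA,
    hA.posSemidef.isHermitian.cfc_eq]
  rfl

lemma gmean_eq (hσ : 0 ≤ σ) (hA : 0 ≤ A) (β : ℝ) :
    Matrix.gmean β σ A =
      σ ^ (1 / 2 : ℝ) * (σ ^ (-(1 / 2) : ℝ) * A * σ ^ (-(1 / 2) : ℝ)) ^ β * σ ^ (1 / 2 : ℝ) := by
  rw [Matrix.gmean, rpowH_eq_rpow hσ, rpowH_eq_rpow hσ,
    rpowH_eq_rpow (rpow_mul_mul_rpow_nonneg hA _)]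

lemma gmean_le_gmean (hσ : 0 ≤ σ) (hA : 0 ≤ A) (hAB : A ≤ B) {β : ℝ} (hβ : β ∈ Set.Icc 0 1) :
    Matrix.gmean β σ A ≤ Matrix.gmean β σ B := by
  rw [gmean_eq hσ hA, gmean_eq hσ (hA.trans hAB)]
  exact rpow_mul_mul_rpow_le (CFC.rpow_le_rpow hβ (rpow_mul_mul_rpow_le hAB _)) _

lemma gmean_of_commute (hσ : IsStrictlyPositive σ) (hA : 0 ≤ A) (h : Commute σ A) (β : ℝ) :
    Matrix.gmean β σ A = σ ^ ((1 - β) / 2) * A ^ β * σ ^ ((1 - β) / 2) := by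
  rw [gmean_eq hσ.nonneg hA, rpow_mul_mul_rpow_rpow_of_commute hσ hA h (by norm_num),
    rpow_mul_rpow_mul_mul_rpow_mul_rpow hσ.isUnit]
  ring_nf

/-- The operator `σ^((1-α)/(2α)) ρ σ^((1-α)/(2α))` in the definition of the sandwiched Rényi
divergence. -/
noncomputable def sandwich (α : ℝ) (ρ σ : Matrix n n ℂ) : Matrix n n ℂ :=
  σ ^ ((1 - α) / (2 * α)) * ρ * σ ^ ((1 - α) / (2 * α))

/-- The quantity `tr (σ^((1-α)/(2α)) ρ σ^((1-α)/(2α)))^α`, whose logarithm is the sandwiched Rényi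
divergence up to normalization. -/
noncomputable def QTilde (α : ℝ) (ρ σ : Matrix n n ℂ) : ℝ :=
  (sandwich α ρ σ ^ α).trace.re

lemma sandwich_nonneg (hρ : 0 ≤ ρ) : 0 ≤ sandwich α ρ σ :=
  rpow_mul_mul_rpow_nonneg hρ _

lemma Dtilde_eq_logb_QTilde (hρ : 0 ≤ ρ) (hσ : 0 ≤ σ) :
    Dtilde α ρ σ = 1 / (α - 1) * Real.logb 2 (QTilde α ρ σ) := by
  rw [Dtilde, rpowH_eq_rpow hσ, rpowH_eq_rpow (rpow_mul_mul_rpow_nonneg hρ _)]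
  rfl

lemma le_gmean_iff_sandwich_le_rpow (hα : α ≠ 0) (hσ : IsStrictlyPositive σ) (hA : 0 ≤ A)
    (h : Commute σ A) : ρ ≤ Matrix.gmean (1 / α) σ A ↔ sandwich α ρ σ ≤ A ^ (1 / α) := by
  have hexp : (1 - 1 / α) / 2 = -((1 - α) / (2 * α)) := by field_simp; ring
  rw [gmean_of_commute hσ hA h, hexp, rpow_mul_mul_rpow_le_iff hσ, sandwich]

lemma QSharp_nonneg : 0 ≤ QSharp α ρ σ :=
  Real.sInf_nonneg <| by
    rintro _ ⟨A, hA, -, rfl⟩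
    exact (Complex.le_def.1 hA.trace_nonneg).1

lemma QSharp_le_re_trace (hA : 0 ≤ A) (h : ρ ≤ Matrix.gmean (1 / α) σ A) :
    QSharp α ρ σ ≤ A.trace.re := by
  refine csInf_le ⟨0, ?_⟩ ⟨A, hA.posSemidef, h, rfl⟩
  rintro _ ⟨B, hB, -, rfl⟩
  exact (Complex.le_def.1 hB.trace_nonneg).1

variable [Fintype (spectrum ℝ σ)]

lemma QTilde_le_card_mul_re_trace (hα : 1 < α) (hρ : 0 ≤ ρ) (hσ : IsStrictlyPositive σ)
    (hA : 0 ≤ A) (h : ρ ≤ Matrix.gmean (1 / α) σ A) :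
    QTilde α ρ σ ≤ Fintype.card (spectrum ℝ σ) * A.trace.re := by
  have hα₀ : 0 < α := one_pos.trans hα
  have hα_inv : 1 / α ∈ Set.Icc (0 : ℝ) 1 := ⟨by positivity, (div_le_one hα₀).2 hα.le⟩
  have hproj := completeOrthogonalIdempotents_spectralProj hσ.nonneg.posSemidef.isHermitian
  set c : ℝ := (Fintype.card (spectrum ℝ σ) : ℝ)
  set B := c • pinching (spectralProj σ) A with hB
  have hAB : A ≤ B := le_card_smul_pinching (isSelfAdjoint_spectralProj σ) hproj.complete hA
  have hσB : Commute σ B :=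
    (commute_pinching_spectralProj hσ.nonneg.posSemidef.isHermitian A).smul_right c
  have hρB : sandwich α ρ σ ≤ B ^ (1 / α) :=
    (le_gmean_iff_sandwich_le_rpow hα₀.ne' hσ (hA.trans hAB) hσB).1
      (h.trans (gmean_le_gmean hσ.nonneg hA hAB hα_inv))
  calc QTilde α ρ σ ≤ ((B ^ (1 / α)) ^ α).trace.re :=
        re_trace_rpow_mono (sandwich_nonneg hρ) hρB hα
    _ = B.trace.re := by
        rw [CFC.rpow_rpow_of_exponent_nonneg B _ _ hα_inv.1 hα₀.le (hA.trans hAB),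
          one_div_mul_cancel hα₀.ne', CFC.rpow_one B (hA.trans hAB)]
    _ = c * A.trace.re := by
        rw [hB, Matrix.trace_smul, trace_pinching hproj, Complex.smul_re, smul_eq_mul]

lemma exists_le_gmean_re_trace_le (hα : 1 < α) (hρ : 0 ≤ ρ) (hσ : IsStrictlyPositive σ) :
    ∃ A, 0 ≤ A ∧ ρ ≤ Matrix.gmean (1 / α) σ A ∧
      A.trace.re ≤ Fintype.card (spectrum ℝ σ) ^ α * QTilde α ρ σ := by
  have hα₀ : 0 < α := one_pos.trans hα
  have hσH := hσ.nonneg.posSemidef.isHermitian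
  have hproj := completeOrthogonalIdempotents_spectralProj hσH
  have hY : 0 ≤ sandwich α ρ σ := sandwich_nonneg hρ
  set c : ℝ := (Fintype.card (spectrum ℝ σ) : ℝ)
  have hc : 0 ≤ c := Nat.cast_nonneg _
  set E := pinching (spectralProj σ) (sandwich α ρ σ)
  have hE : 0 ≤ E := pinching_nonneg (isSelfAdjoint_spectralProj σ) hY
  have hcE : 0 ≤ c • E := smul_nonneg hc hE
  have hσE : Commute σ ((c • E) ^ α) :=
    (commute_rpow hcE ((commute_pinching_spectralProj hσH _).smul_right c).symm α).symm
  refine ⟨(c • E) ^ α, CFC.rpow_nonneg, ?_, ?_⟩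
  · rw [le_gmean_iff_sandwich_le_rpow hα₀.ne' hσ CFC.rpow_nonneg hσE,
      CFC.rpow_rpow_of_exponent_nonneg _ _ _ hα₀.le (by positivity), mul_one_div_cancel hα₀.ne',
      CFC.rpow_one (c • E) hcE]
    exact le_card_smul_pinching (isSelfAdjoint_spectralProj σ) hproj.complete hY
  · rw [smul_rpow hE hc, Matrix.trace_smul, Complex.smul_re, smul_eq_mul]
    exact mul_le_mul_of_nonneg_left
      (re_trace_pinching_rpow_le hproj (isSelfAdjoint_spectralProj σ) hY hα) (by positivity)

theorem QSharp_le_card_rpow_mul_QTilde (hα : 1 < α) (hρ : 0 ≤ ρ) (hσ : IsStrictlyPositive σ) :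
    QSharp α ρ σ ≤ Fintype.card (spectrum ℝ σ) ^ α * QTilde α ρ σ := by
  obtain ⟨A, hA, hρA, htr⟩ := exists_le_gmean_re_trace_le hα hρ hσ
  exact (QSharp_le_re_trace hA hρA).trans htr

theorem QTilde_le_card_mul_QSharp (hα : 1 < α) (hρ : 0 ≤ ρ) (hσ : IsStrictlyPositive σ) :
    QTilde α ρ σ ≤ Fintype.card (spectrum ℝ σ) * QSharp α ρ σ := by
  obtain ⟨A, hA, hρA, -⟩ := exists_le_gmean_re_trace_le hα hρ hσ
  rw [QSharp, ← smul_eq_mul, ← Real.sInf_smul_of_nonneg (Nat.cast_nonneg _)]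
  refine le_csInf (Set.Nonempty.smul_set ⟨_, A, hA.posSemidef, hρA, rfl⟩) ?_
  rintro _ ⟨_, ⟨B, hB, hρB, rfl⟩, rfl⟩
  exact QTilde_le_card_mul_re_trace hα hρ hσ hB.nonneg hρB

end OneShot

section TensorPower

open scoped MatrixOrder Matrix.Norms.L2Operator

variable {ι : Type*}

lemma tpow_conjTranspose (A : Matrix ι ι ℂ) (n : ℕ) : tpow Aᴴ n = (tpow A n)ᴴ := by
  ext f g
  simp [tpow, conjTranspose_apply]

lemma tpow_diagonal [DecidableEq ι] (d : ι → ℂ) (n : ℕ) :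
    tpow (diagonal d) n = diagonal fun f : Fin n → ι => ∏ k, d (f k) := by
  ext f g
  obtain rfl | hfg := eq_or_ne f g
  · simp [tpow]
  · obtain ⟨k, hk⟩ := Function.ne_iff.1 hfg
    rw [diagonal_apply_ne _ hfg, tpow, of_apply]
    exact Finset.prod_eq_zero (Finset.mem_univ k) (diagonal_apply_ne _ hk)

lemma tpow_one [DecidableEq ι] (n : ℕ) : tpow (1 : Matrix ι ι ℂ) n = 1 := by
  rw [← diagonal_one, tpow_diagonal]
  simp

lemma tpow_mul [Fintype ι] (A B : Matrix ι ι ℂ) (n : ℕ) : tpow (A * B) n = tpow A n * tpow B n := by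
  ext f g
  simp only [tpow, of_apply, mul_apply, Finset.prod_univ_sum, Fintype.piFinset_univ,
    Finset.prod_mul_distrib]

lemma trace_tpow [Fintype ι] (A : Matrix ι ι ℂ) (n : ℕ) : (tpow A n).trace = A.trace ^ n := by
  simp only [Matrix.trace, diag, tpow, of_apply, Finset.sum_pow', Fintype.piFinset_univ]

lemma tpow_nonneg [Finite ι] {A : Matrix ι ι ℂ} (hA : 0 ≤ A) (n : ℕ) : 0 ≤ tpow A n := by
  classical
  have := Fintype.ofFinite ι
  obtain ⟨B, rfl⟩ := CStarAlgebra.nonneg_iff_eq_star_mul_self.1 hA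
  rw [star_eq_conjTranspose, tpow_mul, tpow_conjTranspose]
  exact (posSemidef_conjTranspose_mul_self _).nonneg

variable [Fintype ι] [DecidableEq ι] {A ρ σ : Matrix ι ι ℂ}

lemma isUnit_tpow (hA : IsUnit A) (n : ℕ) : IsUnit (tpow A n) := by
  obtain ⟨u, rfl⟩ := hA
  refine ⟨⟨tpow u n, tpow ↑u⁻¹ n, ?_, ?_⟩, rfl⟩ <;> rw [← tpow_mul] <;> simp [tpow_one]

lemma tpow_isStrictlyPositive (hA : IsStrictlyPositive A) (n : ℕ) :
    IsStrictlyPositive (tpow A n) :=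
  (isUnit_tpow hA.isUnit n).isStrictlyPositive (tpow_nonneg hA.nonneg n)

lemma tpow_mul_tpow_of_mul_eq_mul_diagonal {M : Matrix ι ι ℂ} {d : ι → ℝ}
    (h : A * M = M * diagonal fun i => (d i : ℂ)) (n : ℕ) :
    tpow A n * tpow M n
      = tpow M n * diagonal fun f : Fin n → ι => ((∏ k, d (f k) : ℝ) : ℂ) := by
  rw [← tpow_mul, h, tpow_mul, tpow_diagonal]
  simp only [Complex.ofReal_prod]

lemma exists_isUnit_mul_eq_mul_diagonal (hA : A.IsHermitian) :
    ∃ U : Matrix ι ι ℂ, IsUnit U ∧ A * U = U * diagonal fun i => (hA.eigenvalues i : ℂ) := by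
  refine ⟨hA.eigenvectorUnitary, Unitary.isUnit_coe, ?_⟩
  conv_lhs => enter [1]; rw [hA.spectral_theorem]
  rw [Unitary.conjStarAlgAut_apply, Matrix.mul_assoc, Unitary.coe_star_mul_self, Matrix.mul_one]
  rfl

lemma tpow_rpow (hA : 0 ≤ A) (n : ℕ) (r : ℝ) : tpow A n ^ r = tpow (A ^ r) n := by
  have hAH := hA.posSemidef.isHermitian
  obtain ⟨U, hU, hAU⟩ := exists_isUnit_mul_eq_mul_diagonal hAH
  have hArU := cfc_mul_of_mul_eq_mul_diagonal hAH hAU fun x => x ^ r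
  have hpow := cfc_mul_of_mul_eq_mul_diagonal (tpow_nonneg hA n).posSemidef.isHermitian
    (tpow_mul_tpow_of_mul_eq_mul_diagonal hAU n) fun x => x ^ r
  rw [CFC.rpow_eq_cfc_real hA, CFC.rpow_eq_cfc_real (tpow_nonneg hA n)]
  refine (isUnit_tpow hU n).mul_left_injective ?_
  beta_reduce
  rw [tpow_mul_tpow_of_mul_eq_mul_diagonal hArU, hpow]
  simp only [Real.finsetProd_rpow _ _ fun _ _ => hA.posSemidef.eigenvalues_nonneg _]

lemma spectrum_subset_range_of_mul_eq_mul_diagonal {U : Matrix ι ι ℂ} (hU : IsUnit U) {d : ι → ℝ}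
    (h : A * U = U * diagonal fun i => (d i : ℂ)) : spectrum ℝ A ⊆ Set.range d := by
  obtain ⟨u, rfl⟩ := hU
  have hA : A = u * (diagonal fun i => (d i : ℂ) : Matrix ι ι ℂ) * (↑u⁻¹ : Matrix ι ι ℂ) := by
    rw [← h, Units.mul_inv_cancel_right]
  rw [hA, spectrum.units_conjugate, ← spectrum.preimage_algebraMap ℂ, spectrum_diagonal]
  rintro x ⟨i, hi⟩
  exact ⟨i, Complex.ofReal_injective hi⟩

/-- The type of a word `f` of length `n`: the number of occurrences of each letter. -/
noncomputable def letterCount {n : ℕ} (f : Fin n → ι) (i : ι) : Fin (n + 1) :=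
  ⟨Fintype.card {k // f k = i}, Nat.lt_succ_of_le <|
    (Fintype.card_subtype_le _).trans_eq (Fintype.card_fin n)⟩

lemma prod_eq_prod_pow_letterCount {R : Type*} [CommMonoid R] {n : ℕ} (f : Fin n → ι) (d : ι → R) :
    ∏ k, d (f k) = ∏ i, d i ^ (letterCount f i : ℕ) := by
  rw [← Finset.prod_fiberwise' Finset.univ f d]
  simp [letterCount, Fintype.card_subtype]

lemma card_spectrum_tpow_le (hA : A.IsHermitian) (n : ℕ) [Fintype (spectrum ℝ (tpow A n))] :
    Fintype.card (spectrum ℝ (tpow A n)) ≤ (n + 1) ^ Fintype.card ι := by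
  obtain ⟨U, hU, hAU⟩ := exists_isUnit_mul_eq_mul_diagonal hA
  let eigenvalue (t : ι → Fin (n + 1)) : ℝ := ∏ i, hA.eigenvalues i ^ (t i : ℕ)
  have hsub : spectrum ℝ (tpow A n) ⊆ Set.range eigenvalue := by
    refine (spectrum_subset_range_of_mul_eq_mul_diagonal (isUnit_tpow hU n)
      (tpow_mul_tpow_of_mul_eq_mul_diagonal hAU n)).trans ?_
    rintro _ ⟨f, rfl⟩
    exact ⟨letterCount f, (prod_eq_prod_pow_letterCount f _).symm⟩
  calc Fintype.card (spectrum ℝ (tpow A n)) ≤ Nat.card (Set.range eigenvalue) := by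
        rw [← Nat.card_eq_fintype_card]
        exact Nat.card_mono (Set.finite_range _) hsub
    _ ≤ Nat.card (ι → Fin (n + 1)) := Finite.card_range_le _
    _ = (n + 1) ^ Fintype.card ι := by simp

lemma sandwich_tpow (α : ℝ) (hσ : 0 ≤ σ) (n : ℕ) :
    sandwich α (tpow ρ n) (tpow σ n) = tpow (sandwich α ρ σ) n := by
  simp only [sandwich, tpow_rpow hσ, tpow_mul]

lemma QTilde_tpow (α : ℝ) (hρ : 0 ≤ ρ) (hσ : 0 ≤ σ) (n : ℕ) :
    QTilde α (tpow ρ n) (tpow σ n) = QTilde α ρ σ ^ n := by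
  have htr : 0 ≤ (sandwich α ρ σ ^ α).trace := CFC.rpow_nonneg.posSemidef.trace_nonneg
  rw [QTilde, QTilde, sandwich_tpow α hσ, tpow_rpow (sandwich_nonneg hρ), trace_tpow,
    Complex.eq_re_of_ofReal_le htr, ← Complex.ofReal_pow, Complex.ofReal_re, Complex.ofReal_re]

lemma QTilde_pos {α : ℝ} (hα : 0 < α) (hρ : 0 ≤ ρ) (hρ0 : ρ ≠ 0) (hσ : IsStrictlyPositive σ) :
    0 < QTilde α ρ σ := by
  refine re_trace_rpow_pos (sandwich_nonneg hρ) (fun h => hρ0 (le_antisymm ?_ hρ)) hα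
  have := (rpow_mul_mul_rpow_le_iff hσ (B := 0) _).2 h.le
  simpa using this

lemma QTilde_pow_le_mul_QSharp_tpow {α : ℝ} (hα : 1 < α) (hρ : 0 ≤ ρ) (hσ : IsStrictlyPositive σ)
    (n : ℕ) :
    QTilde α ρ σ ^ n ≤ (n + 1) ^ Fintype.card ι * QSharp α (tpow ρ n) (tpow σ n) := by
  have := Fintype.ofFinite (spectrum ℝ (tpow σ n))
  rw [← QTilde_tpow α hρ hσ.nonneg]
  refine (QTilde_le_card_mul_QSharp hα (tpow_nonneg hρ n) (tpow_isStrictlyPositive hσ n)).trans ?_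
  gcongr
  · exact QSharp_nonneg
  · exact_mod_cast card_spectrum_tpow_le hσ.nonneg.posSemidef.isHermitian n

lemma QSharp_tpow_le_mul_QTilde_pow {α : ℝ} (hα : 1 < α) (hρ : 0 ≤ ρ) (hσ : IsStrictlyPositive σ)
    (n : ℕ) :
    QSharp α (tpow ρ n) (tpow σ n)
      ≤ ((n + 1) ^ Fintype.card ι : ℝ) ^ α * QTilde α ρ σ ^ n := by
  have := Fintype.ofFinite (spectrum ℝ (tpow σ n))
  rw [← QTilde_tpow α hρ hσ.nonneg]
  refine (QSharp_le_card_rpow_mul_QTilde hα (tpow_nonneg hρ n)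
    (tpow_isStrictlyPositive hσ n)).trans ?_
  gcongr
  · exact (Complex.le_def.1 CFC.rpow_nonneg.posSemidef.trace_nonneg).1
  · exact_mod_cast card_spectrum_tpow_le hσ.nonneg.posSemidef.isHermitian n

end TensorPower

section Regularization

lemma tendsto_log_div_of_pow_le_mul {Q κ : ℝ} {c S : ℕ → ℝ} (hQ : 0 < Q) (hc : ∀ n, 0 < c n)
    (hlog : Tendsto (fun n => Real.log (c n) / n) atTop (nhds 0))
    (lower : ∀ n, Q ^ n ≤ c n * S n) (upper : ∀ n, S n ≤ c n ^ κ * Q ^ n) :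
    Tendsto (fun n => Real.log (S n) / n) atTop (nhds (Real.log Q)) := by
  have hS (n : ℕ) : 0 < S n :=
    pos_of_mul_pos_right ((pow_pos hQ n).trans_le (lower n)) (hc n).le
  refine tendsto_of_tendsto_of_tendsto_of_le_of_le'
    (by simpa using hlog.const_sub (Real.log Q))
    (by simpa using (hlog.const_mul κ).add_const (Real.log Q)) ?_ ?_
  · filter_upwards [eventually_gt_atTop 0] with n hn
    have hn' : (0 : ℝ) < n := Nat.cast_pos.2 hn
    have h := Real.log_le_log (pow_pos hQ n) (lower n)
    rw [Real.log_pow, Real.log_mul (hc n).ne' (hS n).ne'] at h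
    rw [sub_le_iff_le_add', ← add_div, le_div_iff₀' hn']
    exact h
  · filter_upwards [eventually_gt_atTop 0] with n hn
    have hn' : (0 : ℝ) < n := Nat.cast_pos.2 hn
    have h := Real.log_le_log (hS n) (upper n)
    rw [Real.log_mul (Real.rpow_pos_of_pos (hc n) κ).ne' (pow_pos hQ n).ne',
      Real.log_rpow (hc n), Real.log_pow] at h
    rw [div_le_iff₀' hn', mul_add, mul_left_comm, mul_div_cancel₀ _ hn'.ne']
    exact h

lemma tendsto_log_add_one_pow_div (d : ℕ) :
    Tendsto (fun n : ℕ => Real.log (((n : ℝ) + 1) ^ d) / n) atTop (nhds 0) := by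
  have h := (Real.tendsto_pow_log_div_mul_add_atTop 1 (-1) 1 one_ne_zero).comp
    (tendsto_natCast_atTop_atTop.atTop_add (tendsto_const_nhds (x := (1 : ℝ))))
  simpa [Function.comp_def, mul_div_assoc] using h.const_mul (d : ℝ)

end Regularization

/-- the regularization of D^#_α equals the sandwiched Rényi
divergence: (1/n)·D^#_α(ρ^{⊗n}‖σ^{⊗n}) → 𝐷̃_α(ρ‖σ). -/
theorem DSharp_regularized_eq_Dtilde
    {ι : Type*} [Fintype ι] [DecidableEq ι]
    (α : ℝ) (hα : 1 < α)
    (ρ σ : Matrix ι ι ℂ) (hρ : ρ.PosSemidef) (hρ0 : ρ ≠ 0) (hσ : σ.PosDef) :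
    Tendsto (fun n : ℕ => (1 / (n : ℝ)) * DSharp α (tpow ρ n) (tpow σ n))
      atTop (nhds (Dtilde α ρ σ)) := by
  open scoped MatrixOrder in
  have hρ' : 0 ≤ ρ := hρ.nonneg
  have hσ' : IsStrictlyPositive σ := hσ.isStrictlyPositive
  have hlim := tendsto_log_div_of_pow_le_mul (QTilde_pos (one_pos.trans hα) hρ' hρ0 hσ')
    (fun n => by positivity) (tendsto_log_add_one_pow_div (Fintype.card ι))
    (QTilde_pow_le_mul_QSharp_tpow hα hρ' hσ') (QSharp_tpow_le_mul_QTilde_pow hα hρ' hσ')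
  rw [Dtilde_eq_logb_QTilde hρ' hσ'.nonneg]
  refine ((hlim.div_const (Real.log 2)).const_mul (1 / (α - 1))).congr fun n => ?_
  simp only [DSharp, Real.logb]
  ring
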